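/- arXiv:1609.07027 — 8 statements merged into one kernel-verified Lean document; each statement's English description precedes it below -/
import Mathlib

section
/- Consider a 1-server PIR scheme for a database of k records of 1 bit each (so R = 1), with k ≥ 1. Then for every query q_1 ∈ Q_1 that lies in the support of D_ℓ for some ℓ, the number of distinct responses c_1 that are possible for q_1 (i.e., returned by the server for some database X) is at least 2^k. -/
open scoped ENNReal

/-- An `n`-server PIR scheme for a database of `k` records of `R` bits each. -/
structure PIRScheme (n k R : ℕ) where
  /-- The query set for each server. -/
  Q : Fin n → Type
  /-- Each query set is finite. -/
  fintypeQ : ∀ r, Fintype (Q r)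
  /-- The storage size (in bits) of each server. -/
  s : Fin n → ℕ
  /-- The encoding map of each server. -/
  E : (r : Fin n) → (Fin k → Fin R → Bool) → (Fin (s r) → Bool)
  /-- For each record index `ℓ`, a probability distribution on query tuples. -/
  D : Fin k → PMF ((r : Fin n) → Q r)
  /-- The response length of each server on each query. -/
  d : (r : Fin n) → Q r → ℕ
  /-- The deterministic response map of each server. -/
  resp : (r : Fin n) → (q : Q r) → (Fin (s r) → Bool) → (Fin (d r q) → Bool)
  /-- The reconstruction function. -/
  recon : (ℓ : Fin k) → (q : (r : Fin n) → Q r) →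
    ((r : Fin n) → (Fin (d r (q r)) → Bool)) → (Fin R → Bool)
  /-- Correctness. -/
  correct : ∀ (X : Fin k → Fin R → Bool) (ℓ : Fin k) (q : (r : Fin n) → Q r),
    q ∈ (D ℓ).support →
    recon ℓ q (fun r => resp r (q r) (E r X)) = X ℓ
  /-- Privacy: the marginal of each query component does not depend on `ℓ`. -/
  privacy : ∀ (r : Fin n) (ℓ ℓ' : Fin k),
    (D ℓ).map (fun q => q r) = (D ℓ').map (fun q => q r)

attribute [instance] PIRScheme.fintypeQ

/-- A query tuple is possible if it lies in the support of `D ℓ` for some `ℓ`. -/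
def PIRScheme.Possible {n k R : ℕ} (S : PIRScheme n k R)
    (q : (r : Fin n) → S.Q r) : Prop :=
  ∃ ℓ, q ∈ (S.D ℓ).support

/-- The download complexity: the maximum, over possible query tuples, of the
total number of downloaded bits. -/
noncomputable def PIRScheme.downloadComplexity {n k R : ℕ} (S : PIRScheme n k R) : ℕ :=
  letI : DecidablePred S.Possible := Classical.decPred _
  (Finset.univ.filter S.Possible).sup (fun q => ∑ r, S.d r (q r))

/-!
With a single server, privacy says that the query itself has the same distribution for every
record index, so a query that is possible for one index is possible for all of them. Correctness
then recovers every record from the response to that one query, so distinct databases have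
distinct responses.
-/

namespace PIRScheme

/-- The response tuple `(c_1, …, c_n)` that the servers return to the query tuple `q` when they
store the database `X`. -/
def response {n k R : ℕ} (S : PIRScheme n k R) (q : (r : Fin n) → S.Q r)
    (X : Fin k → Fin R → Bool) : (r : Fin n) → Fin (S.d r (q r)) → Bool :=
  fun r => S.resp r (q r) (S.E r X)

theorem response_injective {n k R : ℕ} (S : PIRScheme n k R) {q : (r : Fin n) → S.Q r}
    (hq : ∀ ℓ, q ∈ (S.D ℓ).support) : Function.Injective (S.response q) := by
  intro X Y hXY
  funext ℓ
  calc
    X ℓ = S.recon ℓ q (S.response q X) := (S.correct X ℓ q (hq ℓ)).symm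
    _ = S.recon ℓ q (S.response q Y) := by rw [hXY]
    _ = Y ℓ := S.correct Y ℓ q (hq ℓ)

theorem Possible.exists_mem_support_apply_eq {n k R : ℕ} {S : PIRScheme n k R}
    {q : (r : Fin n) → S.Q r} (hq : S.Possible q) (r : Fin n) (ℓ : Fin k) :
    ∃ q' ∈ (S.D ℓ).support, q' r = q r := by
  obtain ⟨ℓ₀, hℓ₀⟩ := hq
  have mem_support_marginal : q r ∈ ((S.D ℓ).map fun q' => q' r).support := by
    rw [S.privacy r ℓ ℓ₀]
    exact (PMF.mem_support_map_iff _ _ _).2 ⟨q, hℓ₀, rfl⟩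
  exact (PMF.mem_support_map_iff _ _ _).1 mem_support_marginal

theorem Possible.mem_support {k R : ℕ} {S : PIRScheme 1 k R} {q : (r : Fin 1) → S.Q r}
    (hq : S.Possible q) (ℓ : Fin k) : q ∈ (S.D ℓ).support := by
  obtain ⟨q', hq', h0⟩ := hq.exists_mem_support_apply_eq 0 ℓ
  rwa [← (Equiv.piUnique S.Q).injective h0]

end PIRScheme

theorem one_server_response_count_general {k R : ℕ} (S : PIRScheme 1 k R)
    (q : (r : Fin 1) → S.Q r) (hq : S.Possible q) :
    Set.ncard {c : Fin (S.d 0 (q 0)) → Bool |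
      ∃ X : Fin k → Fin R → Bool, S.resp 0 (q 0) (S.E 0 X) = c} = 2 ^ (k * R) := by
  have response_zero_injective : Function.Injective fun X => S.response q X 0 :=
    (Equiv.piUnique fun r => Fin (S.d r (q r)) → Bool).injective.comp
      (S.response_injective hq.mem_support)
  calc
    (Set.range fun X => S.response q X 0).ncard = Nat.card (Fin k → Fin R → Bool) :=
      Set.ncard_range_of_injective response_zero_injective
    _ = 2 ^ (k * R) := by simp [← pow_mul, mul_comm]

/-- For a 1-server PIR scheme for `k ≥ 1` records of 1 bit each,
every possible query admits at least `2^k` distinct possible responses. -/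
theorem one_server_response_count (k : ℕ) (hk : 1 ≤ k) (S : PIRScheme 1 k 1)
    (q : (r : Fin 1) → S.Q r) (hq : S.Possible q) :
    2 ^ k ≤ Set.ncard {c : Fin (S.d 0 (q 0)) → Bool |
      ∃ X : Fin k → Fin 1 → Bool, S.resp 0 (q 0) (S.E 0 X) = c} := by
  simpa using (one_server_response_count_general S q hq).ge
end

section
/- Consider an n-server PIR scheme for a database of k records of R bits each, with k ≥ 3 and R ≥ 1, whose download complexity is exactly R + 1. Choose ℓ uniformly at random from Fin k and then draw the query tuple (q_1, …, q_n) from D_ℓ, and let α be the probability that the total number of downloaded bits Σ_r d_r(q_r) is at most R. Then α ≤ (R+1)/(kR+1). -/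
open scoped ENNReal

/-!
Call a query specific to record `m` if its answer is a nonconstant function of record `m` alone.
When record `ℓ` is retrieved, the queries specific to other records carry no information about it,
so the remaining answers must contain `R` bits. When only `R` bits are downloaded, reconstruction
is a bijection, so all of them come from queries specific to `ℓ`. By privacy, the expected number
of bits specific to `m` does not depend on which record is retrieved. Hence, if at most `R + c`
bits are ever downloaded and `p m` is the probability of downloading only `R` bits when record `m`
is retrieved, then `R * ∑ m ≠ ℓ, p m + c * p ℓ ≤ c` for every `ℓ`, and it remains to average
over `ℓ`.
-/

open Finset Function

theorem dependsOn_inter {ι β : Type*} {α : ι → Type*} {f : (∀ i, α i) → β} {s t : Set ι}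
    (hs : DependsOn f s) (ht : DependsOn f t) : DependsOn f (s ∩ t) := by
  classical
  intro x y hxy
  calc
    f x = f (s.piecewise x y) := hs fun i hi => by simp [hi]
    _ = f y := ht fun i hi => by
      by_cases his : i ∈ s
      · simpa [his] using hxy i ⟨his, hi⟩
      · simp [his]

section BitStrings

variable {ι : Type*} [Fintype ι]

theorem card_pi_bitstring (d : ι → ℕ) :
    Nat.card (∀ i, Fin (d i) → Bool) = 2 ^ ∑ i, d i := by
  simp [Nat.card_pi, prod_pow_eq_pow_sum]

theorem le_sum_of_injective_bitstring {R : ℕ} {d : ι → ℕ}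
    {f : (Fin R → Bool) → ∀ i, Fin (d i) → Bool} (hf : Injective f) : R ≤ ∑ i, d i := by
  have hcard := Nat.card_le_card_of_injective f hf
  rw [card_pi_bitstring] at hcard
  exact (Nat.pow_le_pow_iff_right one_lt_two).1 (by simpa using hcard)

end BitStrings

section Expectation

variable {α β : Type*}

/-- The expectation of an extended nonnegative function under a probability mass function,
as a sum so that no measurable structure is needed. -/
noncomputable def expectation (p : PMF α) (f : α → ℝ≥0∞) : ℝ≥0∞ :=
  ∑' a, p a * f a

theorem expectation_const (p : PMF α) (c : ℝ≥0∞) : expectation p (fun _ => c) = c := by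
  rw [expectation, ENNReal.tsum_mul_right, p.tsum_coe, one_mul]

theorem expectation_mono {p : PMF α} {f g : α → ℝ≥0∞} (h : ∀ a ∈ p.support, f a ≤ g a) :
    expectation p f ≤ expectation p g := by
  refine ENNReal.tsum_le_tsum fun a => ?_
  by_cases ha : p a = 0
  · simp [ha]
  · gcongr
    exact h a ha

theorem expectation_add (p : PMF α) (f g : α → ℝ≥0∞) :
    expectation p (fun a => f a + g a) = expectation p f + expectation p g := by
  simp only [expectation, mul_add, ENNReal.tsum_add]

theorem expectation_sum {ι : Type*} (p : PMF α) (s : Finset ι) (f : ι → α → ℝ≥0∞) :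
    expectation p (fun a => ∑ i ∈ s, f i a) = ∑ i ∈ s, expectation p (f i) := by
  simp only [expectation, mul_sum]
  exact Summable.tsum_finsetSum fun _ _ => ENNReal.summable

theorem expectation_map (p : PMF α) (g : α → β) (f : β → ℝ≥0∞) :
    expectation (p.map g) f = expectation p (f ∘ g) := by
  classical
  simp only [expectation, PMF.map_apply, ← ENNReal.tsum_mul_right, comp_apply]
  rw [ENNReal.tsum_comm]
  refine tsum_congr fun a => ?_
  simp only [ite_mul, zero_mul, tsum_ite_eq]

end Expectation

section Average

variable {ι : Type*} [Fintype ι] [DecidableEq ι]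

theorem sum_sum_erase {M : Type*} [AddCommMonoid M] (p : ι → M) :
    ∑ i, ∑ j ∈ univ.erase i, p j = (Fintype.card ι - 1) • ∑ j, p j := by
  rw [sum_comm' (t' := univ) (s' := fun j => univ.erase j) (by simp [eq_comm]), smul_sum]
  simp

theorem average_le_of_mul_sum_erase_add_le [Nonempty ι] {a b : ℝ≥0∞} (hb : b ≠ 0)
    (hb' : b ≠ ⊤) {p : ι → ℝ≥0∞} (h : ∀ i, a * ∑ j ∈ univ.erase i, p j + b * p i ≤ b) :
    (Fintype.card ι : ℝ≥0∞)⁻¹ * ∑ i, p i ≤ b / ((Fintype.card ι - 1 : ℕ) * a + b) := by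
  rw [ENNReal.le_div_iff_mul_le (by simp [hb]) (Or.inr hb'), mul_assoc,
    ENNReal.inv_mul_le_iff (by simp) (by simp)]
  calc
    (∑ i, p i) * ((Fintype.card ι - 1 : ℕ) * a + b)
        = a * ((Fintype.card ι - 1) • ∑ j, p j) + b * ∑ i, p i := by
          rw [nsmul_eq_mul]; ring
    _ = ∑ i, (a * ∑ j ∈ univ.erase i, p j + b * p i) := by
          rw [sum_add_distrib, ← mul_sum, ← mul_sum, sum_sum_erase]
    _ ≤ ∑ _i : ι, b := sum_le_sum fun i _ => h i
    _ = Fintype.card ι * b := by simp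

end Average

namespace PIRScheme

variable {n k R : ℕ} (S : PIRScheme n k R)

/-- The answer of server `r` to the query `a`, as a function of the database. -/
def answer {r : Fin n} (a : S.Q r) (X : Fin k → Fin R → Bool) : Fin (S.d r a) → Bool :=
  S.resp r a (S.E r X)

/-- The total number of bits downloaded for a query tuple. -/
def download (q : ∀ r, S.Q r) : ℕ :=
  ∑ r, S.d r (q r)

/-- A query is specific to record `m` if its answer is a nonconstant function of record `m`
alone. Requiring nonconstancy makes `m` unique. -/
def IsSpecificTo (m : Fin k) {r : Fin n} (a : S.Q r) : Prop :=
  DependsOn (S.answer a) {m} ∧ ¬ DependsOn (S.answer a) ∅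

open Classical in
/-- The number of bits downloaded in answers to queries specific to record `m`. -/
noncomputable def specificBits (m : Fin k) (q : ∀ r, S.Q r) : ℕ :=
  ∑ r with S.IsSpecificTo m (q r), S.d r (q r)

/-- The probability that at most `R` bits are downloaded when record `ℓ` is retrieved. -/
noncomputable def shortProb (ℓ : Fin k) : ℝ≥0∞ :=
  ∑' q, if S.download q ≤ R then S.D ℓ q else 0

variable {S} {ℓ m : Fin k} {q : ∀ r, S.Q r}

theorem recon_answer (hq : q ∈ (S.D ℓ).support) (X : Fin k → Fin R → Bool) :
    S.recon ℓ q (fun r => S.answer (q r) X) = X ℓ :=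
  S.correct X ℓ q hq

theorem IsSpecificTo.eq {r : Fin n} {a : S.Q r} (hℓ : S.IsSpecificTo ℓ a)
    (hm : S.IsSpecificTo m a) : ℓ = m := by
  by_contra hne
  apply hℓ.2
  rw [← (Set.disjoint_singleton.2 hne).inter_eq]
  exact dependsOn_inter hℓ.1 hm.1

theorem download_le_downloadComplexity (hq : S.Possible q) :
    S.download q ≤ S.downloadComplexity := by
  classical
  exact le_sup (f := S.download) (mem_filter.2 ⟨mem_univ q, hq⟩)

theorem le_sum_d_of_dependsOn_compl (hq : q ∈ (S.D ℓ).support) {T : Finset (Fin n)}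
    (hT : ∀ r ∉ T, DependsOn (S.answer (q r)) {ℓ}ᶜ) : R ≤ ∑ r ∈ T, S.d r (q r) := by
  let X (y : Fin R → Bool) : Fin k → Fin R → Bool := update (fun _ _ => false) ℓ y
  let answers (y : Fin R → Bool) (r : T) : Fin (S.d r (q r)) → Bool := S.answer (q r) (X y)
  have hinj : Injective answers := by
    intro y z hyz
    have hall : (fun r => S.answer (q r) (X y)) = fun r => S.answer (q r) (X z) := by
      funext r
      by_cases hr : r ∈ T
      · exact congrFun hyz ⟨r, hr⟩
      · exact hT r hr fun i (hi : i ≠ ℓ) => by simp [X, hi]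
    simpa [recon_answer hq, X] using congrArg (S.recon ℓ q) hall
  exact (le_sum_of_injective_bitstring hinj).trans_eq (sum_coe_sort T fun r => S.d r (q r))

theorem le_download (hq : q ∈ (S.D ℓ).support) : R ≤ S.download q :=
  le_sum_d_of_dependsOn_compl hq (by simp)

open Classical in
theorem sum_specificBits (s : Finset (Fin k)) (q : ∀ r, S.Q r) :
    ∑ m ∈ s, S.specificBits m q =
      ∑ r with ∃ m ∈ s, S.IsSpecificTo m (q r), S.d r (q r) := by
  have hdisj : (s : Set (Fin k)).PairwiseDisjoint
      fun m => ({r | S.IsSpecificTo m (q r)} : Finset (Fin n)) := by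
    intro m _ m' _ hne
    simp only [disjoint_left, mem_filter_univ]
    exact fun r hm hm' => hne (hm.eq hm')
  simp only [specificBits]
  rw [← sum_biUnion hdisj]
  congr 1
  ext r
  simp

theorem add_sum_specificBits_le_download (hq : q ∈ (S.D ℓ).support) :
    R + ∑ m ∈ univ.erase ℓ, S.specificBits m q ≤ S.download q := by
  classical
  rw [sum_specificBits, download,
    ← sum_filter_not_add_sum_filter univ fun r => ∃ m ∈ univ.erase ℓ, S.IsSpecificTo m (q r)]
  gcongr
  refine le_sum_d_of_dependsOn_compl hq fun r hr => ?_
  obtain ⟨m, hm, hspec⟩ : ∃ m ∈ univ.erase ℓ, S.IsSpecificTo m (q r) := by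
    simpa using hr
  exact hspec.1.mono (by simpa using (ne_of_mem_erase hm).symm)

theorem recon_bijective (hq : q ∈ (S.D ℓ).support) (hR : S.download q ≤ R) :
    Bijective (S.recon ℓ q) := by
  have hsurj : Surjective (S.recon ℓ q) := fun y => ⟨_, recon_answer hq fun _ => y⟩
  refine hsurj.bijective_of_nat_card_le ?_
  rw [card_pi_bitstring]
  simpa [download] using Nat.pow_le_pow_right two_pos hR

theorem isSpecificTo_of_download_le (hq : q ∈ (S.D ℓ).support) (hR : S.download q ≤ R)
    {r : Fin n} (hr : S.d r (q r) ≠ 0) : S.IsSpecificTo ℓ (q r) := by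
  obtain ⟨hinj, -⟩ := recon_bijective hq hR
  constructor
  · intro X Y hXY
    have hrecon : S.recon ℓ q (fun r => S.answer (q r) X) =
        S.recon ℓ q (fun r => S.answer (q r) Y) := by
      rw [recon_answer hq, recon_answer hq, hXY ℓ rfl]
    exact congrFun (hinj hrecon) r
  · intro hconst
    have hsurj (c : ∀ r, Fin (S.d r (q r)) → Bool) :
        (fun r => S.answer (q r) fun _ => S.recon ℓ q c) = c :=
      hinj (recon_answer hq _)
    have htf : (fun _ => true : Fin (S.d r (q r)) → Bool) = fun _ => false := by
      rw [← congrFun (hsurj fun _ _ => true) r, ← congrFun (hsurj fun _ _ => false) r]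
      exact hconst.empty _ _
    simpa using congrFun htf ⟨0, Nat.pos_of_ne_zero hr⟩

theorem specificBits_eq_download (hq : q ∈ (S.D ℓ).support) (hR : S.download q ≤ R) :
    S.specificBits ℓ q = S.download q := by
  classical
  exact sum_filter_of_ne fun _ _ hr => isSpecificTo_of_download_le hq hR hr

theorem mul_shortProb (S : PIRScheme n k R) (c : ℝ≥0∞) (ℓ : Fin k) :
    c * S.shortProb ℓ = expectation (S.D ℓ) fun q => if S.download q ≤ R then c else 0 := by
  rw [shortProb, ← ENNReal.tsum_mul_left]
  exact tsum_congr fun q => by rw [mul_ite, mul_ite, mul_zero, mul_zero, mul_comm]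

theorem expectation_specificBits_eq (S : PIRScheme n k R) (m ℓ ℓ' : Fin k) :
    expectation (S.D ℓ) (fun q => (S.specificBits m q : ℝ≥0∞)) =
      expectation (S.D ℓ') fun q => (S.specificBits m q : ℝ≥0∞) := by
  classical
  let bits (r : Fin n) (a : S.Q r) : ℝ≥0∞ := if S.IsSpecificTo m a then S.d r a else 0
  have hbits (ℓ : Fin k) : expectation (S.D ℓ) (fun q => (S.specificBits m q : ℝ≥0∞)) =
      ∑ r, expectation ((S.D ℓ).map fun q => q r) (bits r) := by
    simp only [expectation_map, ← expectation_sum]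
    simp [specificBits, sum_filter, bits]
  rw [hbits, hbits]
  exact sum_congr rfl fun r _ => by rw [S.privacy r ℓ ℓ']

theorem mul_shortProb_le_expectation_specificBits (S : PIRScheme n k R) (ℓ : Fin k) :
    R * S.shortProb ℓ ≤ expectation (S.D ℓ) fun q => (S.specificBits ℓ q : ℝ≥0∞) := by
  rw [mul_shortProb]
  refine expectation_mono fun q hq => ?_
  split_ifs with hR
  · rw [specificBits_eq_download hq hR]
    exact_mod_cast le_download hq
  · exact zero_le

theorem sum_expectation_specificBits_add_le {c : ℕ} (hS : S.downloadComplexity ≤ R + c)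
    (ℓ : Fin k) :
    ∑ m ∈ univ.erase ℓ, expectation (S.D ℓ) (fun q => (S.specificBits m q : ℝ≥0∞)) +
      c * S.shortProb ℓ ≤ c := by
  rw [mul_shortProb, ← expectation_sum, ← expectation_add]
  refine (expectation_mono fun q hq => ?_).trans_eq (expectation_const (S.D ℓ) c)
  have hbits : ∑ m ∈ univ.erase ℓ, S.specificBits m q +
      (if S.download q ≤ R then c else 0) ≤ c := by
    have hlower := add_sum_specificBits_le_download hq
    have hupper := download_le_downloadComplexity ⟨ℓ, hq⟩
    split_ifs <;> omega
  exact_mod_cast hbits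

theorem mul_sum_erase_shortProb_add_le {c : ℕ} (hS : S.downloadComplexity ≤ R + c)
    (ℓ : Fin k) : R * ∑ m ∈ univ.erase ℓ, S.shortProb m + c * S.shortProb ℓ ≤ c := by
  refine le_trans ?_ (sum_expectation_specificBits_add_le hS ℓ)
  rw [mul_sum]
  gcongr with m
  rw [S.expectation_specificBits_eq m ℓ m]
  exact S.mul_shortProb_le_expectation_specificBits m

end PIRScheme

theorem one_div_le_add_one_div {k : ℕ} (hk : k ≠ 0) (R : ℕ) :
    (1 : ℝ≥0∞) / ((k - 1 : ℕ) * R + 1) ≤ (R + 1) / (k * R + 1) := by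
  obtain ⟨m, rfl⟩ := Nat.exists_eq_succ_of_ne_zero hk
  have hmul : (m + 1) * R + 1 ≤ (R + 1) * (m * R + 1) := by
    nlinarith [Nat.zero_le (m * R * R)]
  calc
    (1 : ℝ≥0∞) / ((m + 1 - 1 : ℕ) * R + 1) = (R + 1) / ((R + 1) * (m * R + 1)) := by
      simpa using (ENNReal.mul_div_mul_left 1 (m * R + 1 : ℝ≥0∞) (c := R + 1)
        (by simp) (by finiteness)).symm
    _ ≤ (R + 1) / ((m + 1 : ℕ) * R + 1) := by
      gcongr
      exact_mod_cast hmul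

theorem prob_only_R_bits_general {n k R c : ℕ} (hk : k ≠ 0) (hc : c ≠ 0)
    (S : PIRScheme n k R) (hS : S.downloadComplexity ≤ R + c) :
    (k : ℝ≥0∞)⁻¹ * ∑ ℓ, S.shortProb ℓ ≤ c / ((k - 1 : ℕ) * R + c) := by
  have : NeZero k := ⟨hk⟩
  simpa using average_le_of_mul_sum_erase_add_le (by simpa using hc) (ENNReal.natCast_ne_top c)
    (PIRScheme.mul_sum_erase_shortProb_add_le hS)

/-- Theorem 5 of the paper. In a PIR scheme for `k ≥ 3` records of
`R ≥ 1` bits with download complexity exactly `R + 1`, if the record index `ℓ` is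
chosen uniformly from `Fin k` and the query tuple is drawn from `D ℓ`, then the
probability `α` that at most `R` bits are downloaded satisfies
`α ≤ (R+1)/(kR+1)`. -/
theorem prob_only_R_bits (n k R : ℕ) (hk : 3 ≤ k) (hR : 1 ≤ R)
    (S : PIRScheme n k R) (hD : S.downloadComplexity = R + 1) :
    (k : ℝ≥0∞)⁻¹ *
        ∑ ℓ : Fin k, ∑' q : (r : Fin n) → S.Q r,
          (if ∑ r : Fin n, S.d r (q r) ≤ R then S.D ℓ q else 0) ≤
      ((R : ℝ≥0∞) + 1) / ((k : ℝ≥0∞) * (R : ℝ≥0∞) + 1) := by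
  have hk0 : k ≠ 0 := by omega
  exact (prob_only_R_bits_general hk0 one_ne_zero S hD.le).trans
    (by simpa using one_div_le_add_one_div hk0 R)
end

section
/- For all integers k ≥ 1 and R ≥ 1 there exists an (R+1)-server PIR scheme for a database of k records of R bits each in which each server stores the entire kR-bit database (so each s_r = kR and the total storage is (R+1)kR bits), each query set Q_r consists of bit strings of length kR (so the upload complexity is kR(R+1)), and each server responds with exactly one bit to every query (so the download complexity is R + 1). -/
open scoped ENNReal

/-!
View the database as a vector `x` over the two-element field and send uniformly random vectors:
server `0` gets `a` and server `i + 1` gets `a + e_{ℓ,i}`, and each server answers with the inner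
product of its query and `x`. The difference of answers `i + 1` and `0` is `⟨e_{ℓ,i}, x⟩`, which is
bit `i` of record `ℓ`; each single query is a translate of a uniform vector, hence itself uniform
whatever `ℓ` is.
-/

section UniformTranslates

open PMF

theorem pmf_map_equiv_apply {α β : Type*} (p : PMF α) (e : α ≃ β) (b : β) :
    p.map e b = p (e.symm b) := by
  classical
  rw [map_apply, tsum_eq_single (e.symm b)]
  · rw [e.apply_symm_apply, if_pos rfl]
  · intro a ha
    exact if_neg fun hb => ha (e.eq_symm_apply.mpr hb.symm)

theorem uniformOfFintype_map_equiv {α β : Type*} [Fintype α] [Nonempty α] [Fintype β] [Nonempty β]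
    (e : α ≃ β) : (uniformOfFintype α).map e = uniformOfFintype β := by
  ext b
  simp only [pmf_map_equiv_apply, uniformOfFintype_apply, Fintype.card_congr e]

variable {ι G : Type*} [AddGroup G] [Fintype G]

/-- The joint distribution of the translates `a + v r`, `r : ι`, of a single uniformly random
element `a` of the finite group `G`. It serves as the query distribution, with `ι` indexing the
servers. -/
noncomputable def uniformTranslates (v : ι → G) : PMF (ι → G) :=
  (uniformOfFintype G).map fun a r => a + v r

theorem mem_support_uniformTranslates_iff {v q : ι → G} :
    q ∈ (uniformTranslates v).support ↔ ∃ a, (fun r => a + v r) = q := by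
  simp only [uniformTranslates, mem_support_map_iff, mem_support_uniformOfFintype, true_and]

theorem uniformTranslates_map_eval (v : ι → G) (r : ι) :
    (uniformTranslates v).map (fun q => q r) = uniformOfFintype G := by
  rw [uniformTranslates, map_comp]
  exact uniformOfFintype_map_equiv (Equiv.addRight (v r))

end UniformTranslates

theorem add_single_one_dotProduct_sub_dotProduct {ι A : Type*} [Fintype ι] [DecidableEq ι]
    [NonAssocRing A] (a x : ι → A) (t : ι) : (a + Pi.single t 1) ⬝ᵥ x - a ⬝ᵥ x = x t := by
  rw [add_dotProduct, single_one_dotProduct, add_sub_cancel_left]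

namespace PIRScheme

section DownloadComplexity

variable {n k R : ℕ} (S : PIRScheme n k R)

theorem exists_possible (ℓ : Fin k) : ∃ q, S.Possible q :=
  let ⟨q, hq⟩ := (S.D ℓ).support_nonempty
  ⟨q, ℓ, hq⟩

theorem downloadComplexity_eq_of_forall_possible (hk : 0 < k) {N : ℕ}
    (hN : ∀ q, S.Possible q → ∑ r, S.d r (q r) = N) : S.downloadComplexity = N := by
  classical
  obtain ⟨q, hq⟩ := S.exists_possible ⟨0, hk⟩
  have hne : (Finset.univ.filter S.Possible).Nonempty := ⟨q, by simpa using hq⟩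
  calc S.downloadComplexity
      = (Finset.univ.filter S.Possible).sup fun q => ∑ r, S.d r (q r) := by
        unfold downloadComplexity; congr
    _ = (Finset.univ.filter S.Possible).sup fun _ => N :=
        Finset.sup_congr rfl fun q hq => hN q (Finset.mem_filter.mp hq).2
    _ = N := Finset.sup_const hne N

end DownloadComplexity

section SingleBit

variable {k R : ℕ}

/-- The database as a single bit string, in which bit `i` of record `ℓ` stands at position
`finProdFinEquiv (ℓ, i)`. -/
def flattenDatabase (X : Fin k → Fin R → Bool) : Fin (k * R) → Bool :=
  Function.uncurry X ∘ finProdFinEquiv.symm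

theorem flattenDatabase_finProdFinEquiv (X : Fin k → Fin R → Bool) (ℓ : Fin k) (i : Fin R) :
    flattenDatabase X (finProdFinEquiv (ℓ, i)) = X ℓ i := by
  rw [flattenDatabase, Function.comp_apply, Equiv.symm_apply_apply, Function.uncurry_apply_pair]

/-- The vectors by which the common random string is translated to query for record `ℓ`: zero for
server `0`, and the unit vector at bit `i` of record `ℓ` for server `i + 1`. -/
def queryOffset (ℓ : Fin k) : Fin (R + 1) → Fin (k * R) → Bool :=
  Fin.cons 0 fun i => Pi.single (finProdFinEquiv (ℓ, i)) 1

theorem translate_queryOffset_dotProduct_sub (X : Fin k → Fin R → Bool) (ℓ : Fin k) (i : Fin R)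
    (a : Fin (k * R) → Bool) :
    (a + queryOffset ℓ i.succ) ⬝ᵥ flattenDatabase X -
      (a + queryOffset ℓ 0) ⬝ᵥ flattenDatabase X = X ℓ i := by
  rw [queryOffset, Fin.cons_succ, Fin.cons_zero, add_zero,
    add_single_one_dotProduct_sub_dotProduct, flattenDatabase_finProdFinEquiv]

/-- The scheme in which all `R + 1` servers store the whole database and answer with the inner
product of the query and the database. Bit strings are vectors over Mathlib's ring `Bool`, the
two-element field, in which addition and subtraction are both `xor`. -/
noncomputable def singleBit (k R : ℕ) : PIRScheme (R + 1) k R where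
  Q _ := Fin (k * R) → Bool
  fintypeQ _ := inferInstance
  s _ := k * R
  E _ := flattenDatabase
  D ℓ := uniformTranslates (queryOffset ℓ)
  d _ _ := 1
  resp _ q x := fun _ => q ⬝ᵥ x
  recon _ _ c := fun i => c i.succ 0 - c 0 0
  correct X ℓ q hq := by
    obtain ⟨a, rfl⟩ := mem_support_uniformTranslates_iff.mp hq
    funext i
    exact translate_queryOffset_dotProduct_sub X ℓ i a
  privacy r _ _ :=
    (uniformTranslates_map_eval _ r).trans (uniformTranslates_map_eval _ r).symm

theorem sum_s_singleBit (k R : ℕ) : ∑ r, (singleBit k R).s r = (R + 1) * (k * R) :=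
  Fin.sum_const (R + 1) (k * R)

theorem sum_d_singleBit (q : (r : Fin (R + 1)) → (singleBit k R).Q r) :
    ∑ r, (singleBit k R).d r (q r) = R + 1 :=
  (Fin.sum_const (R + 1) 1).trans (mul_one _)

end SingleBit

end PIRScheme

/-- Construction 1 / Theorem 6 of the paper. There is an
`(R+1)`-server PIR scheme for `k` records of `R` bits each in which every server
stores the whole `kR`-bit database (total storage `(R+1)kR`), every query is a bit
string of length `kR` (upload complexity `kR(R+1)`), and every server responds with
exactly one bit to every query (download complexity `R + 1`). -/
theorem construction_one (k R : ℕ) (hk : 1 ≤ k) (hR : 1 ≤ R) :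
    ∃ S : PIRScheme (R + 1) k R,
      (∀ r, S.s r = k * R) ∧
      (∑ r, S.s r = (R + 1) * (k * R)) ∧
      (∀ r, S.Q r = (Fin (k * R) → Bool)) ∧
      (∀ r q, S.d r q = 1) ∧
      S.downloadComplexity = R + 1 := by
  refine ⟨PIRScheme.singleBit k R, fun _ => rfl, PIRScheme.sum_s_singleBit k R, fun _ => rfl,
    fun _ _ => rfl, ?_⟩
  exact PIRScheme.downloadComplexity_eq_of_forall_possible _ hk fun q _ =>
    PIRScheme.sum_d_singleBit q
end

section
/- Let n ≥ 2, k ≥ 1 and R ≥ 1 be integers with n^k dividing R. Then there exists an n-server PIR scheme for a database of k records of R bits each in which each server stores the entire kR-bit database (so the total storage is nkR bits), each query set Q_r consists of bit strings of length k²·n^{k−1}·⌈log₂ n⌉ (so the upload complexity is k²·n^k·⌈log₂ n⌉), and each server responds with exactly ((n^k−1)/(n−1))·(R/n^k) bits to every query, so that the download complexity is (1 − 1/n^k)·(n/(n−1))·R = n·((n^k−1)/(n−1))·(R/n^k). -/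
open scoped ENNReal

/-!
Each record is cut into `n ^ k` symbols. A server returns, for every nonempty set `S` of records,
`(n - 1) ^ (#S - 1)` sums of one symbol from each record in `S`. Suppose record `ℓ` is wanted and
`ℓ ∈ S`, `S ≠ {ℓ}`. The unwanted part of each `S`-sum is taken to be an `S \ {ℓ}`-sum returned by
another server: the `(n - 1) * (n - 1) ^ (#S - 2)` such sums are exactly as many as the `S`-sums,
so no server needs to use the same one twice. Hence every sum involving record `ℓ` reveals a fresh
symbol of it, and over the `n` servers these are `n * n ^ (k - 1)` symbols, the whole record. Each
server sees an injective choice of symbols from each record, which a uniformly random permutation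
of the symbols makes independent of `ℓ`.
-/

theorem map_uniformOfFintype_equiv {α β : Type*} [Fintype α] [Nonempty α] [Fintype β]
    [Nonempty β] (e : α ≃ β) : (PMF.uniformOfFintype α).map e = PMF.uniformOfFintype β := by
  classical
  ext b
  rw [PMF.map_apply, tsum_eq_single (e.symm b) fun a ha => if_neg fun hb => ha (by simp [hb])]
  simp [Fintype.card_congr e]

theorem exists_leftInverse_bits {α : Type*} [Fintype α] [Nonempty α] {L : ℕ}
    (h : Fintype.card α ≤ 2 ^ L) :
    ∃ (encode : α → Fin L → Bool) (decode : (Fin L → Bool) → α),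
      Function.LeftInverse decode encode := by
  obtain ⟨encode⟩ : Nonempty (α ↪ (Fin L → Bool)) :=
    Function.Embedding.nonempty_of_card_le (by simpa using h)
  exact ⟨encode, Function.invFun encode, Function.leftInverse_invFun encode.injective⟩

/-- A string of `N` bits cut into pieces of `m` bits indexed by a type `α` with
`card α * m = N`. -/
noncomputable def piecesEquiv {α : Type*} [Fintype α] {m N : ℕ} (h : Fintype.card α * m = N) :
    (Fin N → Bool) ≃ (α → Fin m → Bool) :=
  ((Fintype.equivFinOfCardEq (by simpa using h)).arrowCongr (Equiv.refl Bool)).symm.trans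
    (Equiv.curry α (Fin m) Bool)

namespace PIRScheme

variable {n k R d : ℕ} {Q K : Type} [Fintype Q]

/-- The scheme in which every server stores the whole database, a key is drawn from `keyDist`,
and the queries for record `ℓ` are computed from the key by `query ℓ`. Reconstruction picks any
database consistent with the responses. -/
noncomputable def replicated (keyDist : PMF K) (query : Fin k → K → Fin n → Q)
    (respond : Q → (Fin k → Fin R → Bool) → Fin d → Bool)
    (determined : ∀ ℓ κ X X',
      (∀ r, respond (query ℓ κ r) X = respond (query ℓ κ r) X') → X ℓ = X' ℓ)
    (marginal_eq : ∀ r ℓ ℓ',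
      keyDist.map (fun κ => query ℓ κ r) = keyDist.map (fun κ => query ℓ' κ r)) :
    PIRScheme n k R :=
  let store : (Fin k → Fin R → Bool) ≃ (Fin (k * R) → Bool) :=
    (Equiv.curry (Fin k) (Fin R) Bool).symm.trans
      (finProdFinEquiv.arrowCongr (Equiv.refl Bool))
  { Q := fun _ => Q
    fintypeQ := fun _ => inferInstance
    s := fun _ => k * R
    E := fun _ => store
    D := fun ℓ => keyDist.map (query ℓ)
    d := fun _ _ => d
    resp := fun _ q Z => respond q (store.symm Z)
    recon := fun ℓ q c => Function.invFun (fun X r => respond (q r) X) c ℓ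
    correct := by
      intro X ℓ q hq
      obtain ⟨κ, -, rfl⟩ := (PMF.mem_support_map_iff _ _ _).mp hq
      simp only [Equiv.symm_apply_apply]
      exact determined ℓ κ _ X <| congrFun <|
        Function.apply_invFun_apply (f := fun X r => respond (query ℓ κ r) X)
    privacy := fun r ℓ ℓ' => by
      rw [PMF.map_comp, PMF.map_comp]
      exact marginal_eq r ℓ ℓ' }

theorem downloadComplexity_eq_of_forall_d_eq (S : PIRScheme n k R) (hk : 0 < k)
    (h : ∀ r q, S.d r q = d) : S.downloadComplexity = n * d := by
  classical
  simp only [downloadComplexity, h, Finset.sum_const, Finset.card_univ, Fintype.card_fin,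
    smul_eq_mul]
  obtain ⟨q, hq⟩ := (S.D ⟨0, hk⟩).support_nonempty
  exact Finset.sup_const ⟨q, Finset.mem_filter.mpr ⟨Finset.mem_univ q, _, hq⟩⟩ _

end PIRScheme

namespace SunJafar

/-- The number of symbols each server returns that are sums over a given set of `m` records. No
symbols are returned for the empty set. -/
def slotCount (n : ℕ) : ℕ → ℕ
  | 0 => 0
  | m + 1 => (n - 1) ^ m

variable {n : ℕ} {ι : Type*}

theorem mul_slotCount_card {S : Finset ι} (hS : S.Nonempty) :
    (n - 1) * slotCount n S.card = (n - 1) ^ S.card := by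
  obtain ⟨m, hm⟩ := Nat.exists_eq_succ_of_ne_zero hS.card_pos.ne'
  rw [hm, slotCount, Nat.pow_succ']

theorem slotCount_card_of_mem [DecidableEq ι] {S : Finset ι} {j : ι} (hj : j ∈ S) :
    slotCount n S.card = (n - 1) ^ (S.erase j).card := by
  rw [← Finset.card_erase_add_one hj, slotCount]

/-- The coordinates of a server's response: pairs of a set of records and a running number. The
response in such a slot is the sum of one symbol from each record of the set. -/
abbrev Slot (n : ℕ) (ι : Type*) : Type _ := Σ S : Finset ι, Fin (slotCount n S.card)

/-- The slots to which record `j` contributes a symbol. -/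
abbrev SlotContaining (n : ℕ) (j : ι) : Type _ := {a : Slot n ι // j ∈ a.1}

/-- The positions of the symbols of record `j`, indexed by the server and the slot through which
they are retrieved when record `j` is wanted and nothing is permuted. -/
abbrev Symbol (n : ℕ) (j : ι) : Type _ := Fin n × SlotContaining n j

/-- A query tells the server which symbol of each record to use in each slot. -/
abbrev Query (n : ℕ) (ι : Type*) : Type _ :=
  (j : ι) → SlotContaining n j → Symbol n j

theorem nonempty_query (hn : 1 ≤ n) : Nonempty (Query n ι) :=
  ⟨fun _ p => (⟨0, hn⟩, p)⟩

section Cardinality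

variable [Fintype ι]

theorem mul_card_slot_add_one (hn : 1 ≤ n) :
    (n - 1) * Fintype.card (Slot n ι) + 1 = n ^ Fintype.card ι := by
  classical
  calc (n - 1) * Fintype.card (Slot n ι) + 1
      = ∑ S ∈ Finset.univ.erase (∅ : Finset ι), (n - 1) * slotCount n S.card + 1 := by
        simp only [Fintype.card_sigma, Fintype.card_fin, ← Finset.mul_sum]
        rw [Finset.sum_erase Finset.univ (by rfl)]
    _ = ∑ S ∈ Finset.univ.erase (∅ : Finset ι), (n - 1) ^ S.card + 1 := by
        congr 1
        exact Finset.sum_congr rfl fun S hS =>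
          mul_slotCount_card (Finset.nonempty_iff_ne_empty.mpr (Finset.ne_of_mem_erase hS))
    _ = ∑ S : Finset ι, (n - 1) ^ S.card := by
        simp [← Finset.sum_erase_add _ _ (Finset.mem_univ (∅ : Finset ι))]
    _ = n ^ Fintype.card ι := by
        simpa [Nat.sub_add_cancel hn] using Fintype.sum_pow_mul_eq_add_pow ι (n - 1) 1

theorem card_slot (hn : 2 ≤ n) :
    Fintype.card (Slot n ι) = (n ^ Fintype.card ι - 1) / (n - 1) := by
  rw [← mul_card_slot_add_one (by omega), Nat.add_sub_cancel,
    Nat.mul_div_cancel_left _ (by omega)]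

variable [DecidableEq ι]

theorem card_slotContaining (hn : 1 ≤ n) (j : ι) :
    Fintype.card (SlotContaining n j) = n ^ (Fintype.card ι - 1) := by
  calc Fintype.card (SlotContaining n j)
      = ∑ S : Finset ι with j ∈ S, slotCount n S.card := by
        rw [Fintype.card_subtype, Finset.card_filter, Fintype.sum_sigma, Finset.sum_filter]
        exact Finset.sum_congr rfl fun S _ => by split_ifs <;> simp
    _ = ∑ T ∈ (Finset.univ.erase j).powerset, (n - 1) ^ T.card := by
        refine Finset.sum_nbij' (Finset.erase · j) (insert j) ?_ ?_ ?_ ?_ ?_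
        · exact fun S _ => Finset.mem_powerset.mpr (Finset.erase_subset_erase j S.subset_univ)
        · simp
        · exact fun S hS => Finset.insert_erase (Finset.mem_filter.mp hS).2
        · exact fun T hT => Finset.erase_insert fun hj =>
            Finset.notMem_erase j _ (Finset.mem_powerset.mp hT hj)
        · exact fun S hS => slotCount_card_of_mem (Finset.mem_filter.mp hS).2
    _ = n ^ (Fintype.card ι - 1) := by
        simpa [Nat.sub_add_cancel hn] using
          Finset.sum_pow_mul_eq_add_pow (n - 1) 1 (Finset.univ.erase j)

theorem card_symbol (hn : 1 ≤ n) (j : ι) :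
    Fintype.card (Symbol n j) = n ^ Fintype.card ι := by
  rw [Fintype.card_prod, Fintype.card_fin, card_slotContaining hn,
    mul_pow_sub_one (Fintype.card_pos_iff.mpr ⟨j⟩).ne']

theorem card_query_le (hn : 1 ≤ n) :
    Fintype.card (Query n ι) ≤
      2 ^ (Fintype.card ι ^ 2 * n ^ (Fintype.card ι - 1) * Nat.clog 2 n) := by
  generalize hk : Fintype.card ι = k
  calc Fintype.card (Query n ι)
      = ∏ j : ι, Fintype.card (Symbol n j) ^ Fintype.card (SlotContaining n j) := by
        simp only [Fintype.card_pi, Finset.prod_const, Finset.card_univ]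
    _ = n ^ (k ^ 2 * n ^ (k - 1)) := by
        simp only [card_symbol hn, card_slotContaining hn, Finset.prod_const, Finset.card_univ, hk]
        rw [← pow_mul, ← pow_mul]
        ring_nf
    _ ≤ (2 ^ Nat.clog 2 n) ^ (k ^ 2 * n ^ (k - 1)) :=
        Nat.pow_le_pow_left (Nat.le_pow_clog one_lt_two n) _
    _ = 2 ^ (k ^ 2 * n ^ (k - 1) * Nat.clog 2 n) := by rw [← pow_mul, mul_comm]

end Cardinality

section SideInformation

variable [DecidableEq ι] {ℓ : ι} {r : Fin n}

/-- For a set `S ∋ ℓ` of at least two records, a matching of the `S`-slots of server `r` with the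
`S.erase ℓ`-slots of the other servers. -/
noncomputable def sideEquiv (r : Fin n) {S : Finset ι} (hℓ : ℓ ∈ S) (hS : S.Nontrivial) :
    Fin (slotCount n S.card) ≃ {r' // r' ≠ r} × Fin (slotCount n (S.erase ℓ).card) :=
  Fintype.equivOfCardEq <| by
    rw [Fintype.card_prod, Fintype.card_subtype_compl, Fintype.card_fin, Fintype.card_fin,
      Fintype.card_fin, Fintype.card_unique, mul_slotCount_card hS.erase_nonempty,
      slotCount_card_of_mem hℓ]

/-- Where to find the sum of the unwanted symbols of a slot `a` of server `r` when record `ℓ` is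
wanted: a server together with a slot. If there is nothing to remove (`ℓ ∉ a.1`) or nothing left
after the removal (`a.1 = {ℓ}`), the value is `(r, a)` itself. -/
noncomputable def sideInfo (ℓ : ι) (r : Fin n) (a : Slot n ι) : Fin n × Slot n ι :=
  if h : ℓ ∈ a.1 ∧ a.1.Nontrivial then
    let b := sideEquiv r h.1 h.2 a.2
    (b.1, ⟨a.1.erase ℓ, b.2⟩)
  else (r, a)

theorem sideInfo_of_notMem {a : Slot n ι} (h : ℓ ∉ a.1) : sideInfo ℓ r a = (r, a) :=
  dif_neg fun h' => h h'.1

theorem sideInfo_snd_fst {a : Slot n ι} (h : (a.1.erase ℓ).Nonempty) :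
    (sideInfo ℓ r a).2.1 = a.1.erase ℓ := by
  by_cases hℓ : ℓ ∈ a.1
  · rw [sideInfo, dif_pos ⟨hℓ, (Finset.erase_nonempty hℓ).mp h⟩]
  · rw [sideInfo_of_notMem hℓ, Finset.erase_eq_of_notMem hℓ]

theorem mem_sideInfo {a : Slot n ι} {j : ι} (hj : j ∈ a.1) (hjℓ : j ≠ ℓ) :
    j ∈ (sideInfo ℓ r a).2.1 := by
  have hmem : j ∈ a.1.erase ℓ := Finset.mem_erase.mpr ⟨hjℓ, hj⟩
  rwa [sideInfo_snd_fst ⟨j, hmem⟩]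

theorem sideInfo_injective (ℓ : ι) (r : Fin n) : Function.Injective (sideInfo ℓ r) := by
  rintro ⟨S, i⟩ ⟨S', i'⟩ heq
  simp only [sideInfo] at heq
  split_ifs at heq with h h' h'
  · simp only [Prod.mk.injEq, Sigma.mk.injEq] at heq
    obtain ⟨hserver, hset, hslot⟩ := heq
    obtain rfl : S = S' := by rw [← Finset.insert_erase h.1, hset, Finset.insert_erase h'.1]
    rw [(sideEquiv r h.1 h.2).injective (Prod.ext (Subtype.ext hserver) (eq_of_heq hslot))]
  · exact absurd (congrArg Prod.fst heq) (sideEquiv r h.1 h.2 i).1.2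
  · exact absurd (congrArg Prod.fst heq).symm (sideEquiv r h'.1 h'.2 i').1.2
  · exact congrArg Prod.snd heq

/-- The unpermuted query to server `r` when record `ℓ` is wanted: every slot retrieves its own
symbol of record `ℓ`, and reuses the symbols of the other records from its side information. -/
noncomputable def retrievalQuery (ℓ : ι) (r : Fin n) : Query n ι := fun j p =>
  if h : j = ℓ then (r, p)
  else ((sideInfo ℓ r p.1).1, ⟨(sideInfo ℓ r p.1).2, mem_sideInfo p.2 h⟩)

theorem retrievalQuery_self (p : SlotContaining n ℓ) : retrievalQuery ℓ r ℓ p = (r, p) :=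
  dif_pos rfl

theorem retrievalQuery_injective (ℓ : ι) (r : Fin n) (j : ι) :
    Function.Injective (retrievalQuery ℓ r j) := by
  intro p q heq
  by_cases h : j = ℓ
  · simpa [retrievalQuery, h] using heq
  · simp only [retrievalQuery, h, dif_neg, not_false_eq_true, Prod.mk.injEq,
      Subtype.mk.injEq] at heq
    exact Subtype.ext (sideInfo_injective ℓ r (Prod.ext heq.1 heq.2))

theorem retrievalQuery_sideInfo {a : Slot n ι} (hne : (a.1.erase ℓ).Nonempty) {j : ι}
    (ha : j ∈ a.1) (hb : j ∈ (sideInfo ℓ r a).2.1) :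
    retrievalQuery ℓ r j ⟨a, ha⟩ =
      retrievalQuery ℓ (sideInfo ℓ r a).1 j ⟨(sideInfo ℓ r a).2, hb⟩ := by
  have hset := sideInfo_snd_fst (r := r) hne
  have hjℓ : j ≠ ℓ := Finset.ne_of_mem_erase (hset ▸ hb)
  have hfix : sideInfo ℓ (sideInfo ℓ r a).1 (sideInfo ℓ r a).2 = sideInfo ℓ r a :=
    sideInfo_of_notMem (hset ▸ Finset.notMem_erase ℓ a.1)
  simp only [retrievalQuery, hjℓ, dif_neg, not_false_eq_true, hfix]

end SideInformation

/-- A query with the symbols of each record `j` renamed by the permutation `π j`. -/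
def scramble (π : (j : ι) → Equiv.Perm (Symbol n j)) (t : Query n ι) : Query n ι :=
  fun j p => π j (t j p)

theorem map_scramble_eq_of_injective [Fintype ι] [DecidableEq ι] {t t' : Query n ι}
    (ht : ∀ j, Function.Injective (t j)) (ht' : ∀ j, Function.Injective (t' j)) :
    (PMF.uniformOfFintype ((j : ι) → Equiv.Perm (Symbol n j))).map (scramble · t) =
      (PMF.uniformOfFintype ((j : ι) → Equiv.Perm (Symbol n j))).map (scramble · t') := by
  choose τ hτ using fun j => Equiv.Perm.exists_extending_pair (t j) (t' j) (ht j) (ht' j)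
  have hcomp : (scramble · t') = (scramble · t) ∘ Equiv.mulRight τ := by
    funext π j p
    simp [scramble, hτ]
  rw [hcomp, ← PMF.map_comp, map_uniformOfFintype_equiv]

section Decoding

variable [Fintype ι] [DecidableEq ι] {M : Type*}

/-- The sum of the symbols selected by the query `t` for the slot `a`. -/
def answer [AddCommMonoid M] (t : Query n ι) (X : (j : ι) → Symbol n j → M) (a : Slot n ι) : M :=
  ∑ j, if h : j ∈ a.1 then X j (t j ⟨a, h⟩) else 0

theorem answer_eq_add_sum_erase [AddCommMonoid M] {ℓ : ι} (t : Query n ι)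
    (X : (j : ι) → Symbol n j → M) {a : Slot n ι} (hℓ : ℓ ∈ a.1) :
    answer t X a = X ℓ (t ℓ ⟨a, hℓ⟩) +
      ∑ j ∈ Finset.univ.erase ℓ, if h : j ∈ a.1 then X j (t j ⟨a, h⟩) else 0 := by
  rw [answer, ← Finset.add_sum_erase _ _ (Finset.mem_univ ℓ), dif_pos hℓ]

theorem answer_of_erase_eq_empty [AddCommMonoid M] {ℓ : ι} (t : Query n ι)
    (X : (j : ι) → Symbol n j → M) {a : Slot n ι} (hℓ : ℓ ∈ a.1) (ha : a.1.erase ℓ = ∅) :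
    answer t X a = X ℓ (t ℓ ⟨a, hℓ⟩) := by
  rw [answer_eq_add_sum_erase t X hℓ, Finset.sum_eq_zero, add_zero]
  intro j hj
  refine dif_neg fun h => Finset.notMem_empty j ?_
  exact ha ▸ Finset.mem_erase.mpr ⟨Finset.ne_of_mem_erase hj, h⟩

theorem answer_eq_add_answer [AddCommMonoid M] {ℓ : ι} {t t' : Query n ι}
    (X : (j : ι) → Symbol n j → M) {a b : Slot n ι} (hℓ : ℓ ∈ a.1) (hb : b.1 = a.1.erase ℓ)
    (htt' : ∀ j (h : j ∈ a.1) (h' : j ∈ b.1), t j ⟨a, h⟩ = t' j ⟨b, h'⟩) :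
    answer t X a = X ℓ (t ℓ ⟨a, hℓ⟩) + answer t' X b := by
  have hℓb : ℓ ∉ b.1 := hb ▸ Finset.notMem_erase ℓ a.1
  rw [answer_eq_add_sum_erase t X hℓ, answer, ← Finset.add_sum_erase _ _ (Finset.mem_univ ℓ),
    dif_neg hℓb, zero_add]
  congr 1
  refine Finset.sum_congr rfl fun j hj => ?_
  have hmem : j ∈ b.1 ↔ j ∈ a.1 := by
    rw [hb, Finset.mem_erase, and_iff_right (Finset.ne_of_mem_erase hj)]
  by_cases h : j ∈ a.1
  · rw [dif_pos h, dif_pos (hmem.mpr h), htt']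
  · rw [dif_neg h, dif_neg (hmem.not.mpr h)]

theorem record_eq_of_answers_eq [AddCancelCommMonoid M] (ℓ : ι)
    (π : (j : ι) → Equiv.Perm (Symbol n j)) {X X' : (j : ι) → Symbol n j → M}
    (h : ∀ r, answer (scramble π (retrievalQuery ℓ r)) X =
      answer (scramble π (retrievalQuery ℓ r)) X') :
    X ℓ = X' ℓ := by
  funext i
  obtain ⟨⟨r, a, hℓ⟩, rfl⟩ := (π ℓ).surjective i
  have hsymbol : scramble π (retrievalQuery ℓ r) ℓ ⟨a, hℓ⟩ = π ℓ (r, ⟨a, hℓ⟩) :=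
    congrArg (π ℓ) (retrievalQuery_self _)
  rw [← hsymbol]
  have hr := congrFun (h r) a
  rcases (a.1.erase ℓ).eq_empty_or_nonempty with hempty | hne
  · rwa [answer_of_erase_eq_empty _ X hℓ hempty, answer_of_erase_eq_empty _ X' hℓ hempty] at hr
  · have hdecode (Y : (j : ι) → Symbol n j → M) :=
      answer_eq_add_answer (t := scramble π (retrievalQuery ℓ r))
        (t' := scramble π (retrievalQuery ℓ (sideInfo ℓ r a).1)) Y hℓ (sideInfo_snd_fst hne)
        fun j ha hb => congrArg (π j) (retrievalQuery_sideInfo hne ha hb)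
    rw [hdecode X, hdecode X', h] at hr
    exact add_right_cancel hr

end Decoding

/-- The scheme with the queries transmitted as `L`-bit strings and the records cut into `n ^ k`
symbols of `m` bits, which are added bitwise. The key is a permutation of the symbols of each
record. -/
noncomputable def scheme {k m L : ℕ} (hn : 1 ≤ n) {encode : Query n (Fin k) → Fin L → Bool}
    {decode : (Fin L → Bool) → Query n (Fin k)} (hdecode : Function.LeftInverse decode encode) :
    PIRScheme n k (n ^ k * m) :=
  let symbols (j : Fin k) : (Fin (n ^ k * m) → Bool) ≃ (Symbol n j → Fin m → Bool) :=
    piecesEquiv (by rw [card_symbol hn, Fintype.card_fin])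
  PIRScheme.replicated (PMF.uniformOfFintype ((j : Fin k) → Equiv.Perm (Symbol n j)))
    (fun ℓ π r => encode (scramble π (retrievalQuery ℓ r)))
    (fun q X => (piecesEquiv rfl).symm (answer (decode q) fun j => symbols j (X j)))
    (determined := fun ℓ π X X' h => (symbols ℓ).injective <|
      record_eq_of_answers_eq ℓ π fun r => by
        simpa only [hdecode _, EmbeddingLike.apply_eq_iff_eq] using h r)
    (marginal_eq := fun r ℓ ℓ' => by
      have hscramble := map_scramble_eq_of_injective (retrievalQuery_injective ℓ r)
        (retrievalQuery_injective ℓ' r)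
      simpa only [PMF.map_comp, Function.comp_def] using congrArg (PMF.map encode) hscramble)

end SunJafar

/-- Construction 5 / Theorem 10 of the paper. For `n ≥ 2` with
`n^k ∣ R` there is an `n`-server PIR scheme for `k` records of `R` bits each in
which every server stores the whole `kR`-bit database (total storage `nkR`), every
query is a bit string of length `k²·n^(k-1)·⌈log₂ n⌉` (upload complexity
`k²·n^k·⌈log₂ n⌉`), and every server responds with exactly
`((n^k - 1)/(n-1))·(R/n^k)` bits to every query, so the download complexity is
`(1 - 1/n^k)·(n/(n-1))·R = n·((n^k - 1)/(n-1))·(R/n^k)`. -/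
theorem construction_five (n k R : ℕ) (hn : 2 ≤ n) (hk : 1 ≤ k) (hR : 1 ≤ R)
    (hdvd : n ^ k ∣ R) :
    ∃ S : PIRScheme n k R,
      (∀ r, S.s r = k * R) ∧
      (∑ r, S.s r = n * (k * R)) ∧
      (∀ r, S.Q r = (Fin (k ^ 2 * n ^ (k - 1) * Nat.clog 2 n) → Bool)) ∧
      (∀ r q, S.d r q = (n ^ k - 1) / (n - 1) * (R / n ^ k)) ∧
      S.downloadComplexity = n * ((n ^ k - 1) / (n - 1) * (R / n ^ k)) := by
  obtain ⟨m, rfl⟩ := hdvd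
  have hn' : 1 ≤ n := by omega
  have := SunJafar.nonempty_query (ι := Fin k) hn'
  have hcard := SunJafar.card_query_le (ι := Fin k) hn'
  rw [Fintype.card_fin] at hcard
  obtain ⟨encode, decode, hdecode⟩ := exists_leftInverse_bits hcard
  let S : PIRScheme n k (n ^ k * m) := SunJafar.scheme hn' hdecode
  have hs : ∀ r, S.s r = k * (n ^ k * m) := fun _ => rfl
  have hd : ∀ r q, S.d r q = (n ^ k - 1) / (n - 1) * (n ^ k * m / n ^ k) := fun r q =>
    calc S.d r q = Fintype.card (SunJafar.Slot n (Fin k)) * m := rfl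
      _ = (n ^ k - 1) / (n - 1) * (n ^ k * m / n ^ k) := by
        rw [SunJafar.card_slot hn, Fintype.card_fin, Nat.mul_div_cancel_left m (by positivity)]
  exact ⟨S, hs, by simp [hs], fun _ => rfl, hd, S.downloadComplexity_eq_of_forall_d_eq hk hd⟩
end

section
/- Let n ≥ 2 and k ≥ 1 be integers. The number of vectors v = (v_1, …, v_k) with each v_i ∈ {0, 1, …, n−1}, with v not identically zero, and with Σ_{i=1}^k v_i ≡ 0 (mod n−1) (the sum taken over the integers), is exactly (n^k − 1)/(n − 1). -/
/-!
Read `v` as the base-`n` expansion of an integer in `{0, …, n ^ k - 1}`. As `n ≡ 1` modulo `n - 1`,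
this integer is congruent to its digit sum ("casting out nines"), so the vectors to be counted
correspond to the multiples of `n - 1` in the interval `[1, n ^ k - 1]`. The same holds for any `d`
with `n ≡ 1` modulo `d` in place of `n - 1`.
-/

open Finset

lemma finFunctionFinEquiv_modEq_sum {d n k : ℕ} (h : n ≡ 1 [MOD d]) (v : Fin k → Fin n) :
    (finFunctionFinEquiv v : ℕ) ≡ ∑ i, (v i : ℕ) [MOD d] := by
  rw [finFunctionFinEquiv_apply]
  refine Nat.ModEq.sum fun i _ ↦ ?_
  simpa only [one_pow, mul_one] using (h.pow (i : ℕ)).mul_left (v i : ℕ)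

lemma finFunctionFinEquiv_ne_zero_iff {n k : ℕ} (v : Fin k → Fin n) :
    (finFunctionFinEquiv v : ℕ) ≠ 0 ↔ ∃ i, (v i : ℕ) ≠ 0 := by
  have base_pow_ne_zero (i : Fin k) : n ^ (i : ℕ) ≠ 0 := pow_ne_zero _ (v i).pos.ne'
  simp only [finFunctionFinEquiv_apply, ne_eq, sum_eq_zero_iff, mem_univ, forall_const,
    mul_eq_zero, base_pow_ne_zero, or_false, not_forall]

lemma card_filter_fin_eq_card_filter_range (N : ℕ) (p : ℕ → Prop) [DecidablePred p] :
    #{x : Fin N | p x} = #{x ∈ range N | p x} := by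
  simp only [card_filter, Fin.sum_univ_eq_sum_range (fun x ↦ if p x then 1 else 0)]

lemma card_fin_ne_zero_and_dvd (N d : ℕ) :
    #{x : Fin N | (x : ℕ) ≠ 0 ∧ d ∣ x} = (N - 1) / d := by
  rw [card_filter_fin_eq_card_filter_range N fun x ↦ x ≠ 0 ∧ d ∣ x]
  cases N with
  | zero => simp
  | succ N => exact Nat.card_multiples' N d

lemma card_ne_zero_and_dvd_sum_eq_card_fin {d n : ℕ} (h : n ≡ 1 [MOD d]) (k : ℕ) :
    #{v : Fin k → Fin n | (∃ i, (v i : ℕ) ≠ 0) ∧ d ∣ ∑ i, (v i : ℕ)} =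
      #{x : Fin (n ^ k) | (x : ℕ) ≠ 0 ∧ d ∣ x} := by
  refine card_equiv finFunctionFinEquiv fun v ↦ ?_
  simp only [mem_filter_univ, finFunctionFinEquiv_ne_zero_iff,
    (finFunctionFinEquiv_modEq_sum h v).dvd_iff dvd_rfl]

-- Stated as a product because `d = 0` is possible when `n = 1`.
theorem card_V_general {d n : ℕ} (hn : 0 < n) (h : n ≡ 1 [MOD d]) (k : ℕ) :
    d * #{v : Fin k → Fin n | (∃ i, (v i : ℕ) ≠ 0) ∧ d ∣ ∑ i, (v i : ℕ)} + 1 = n ^ k := by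
  have one_le_pow : 1 ≤ n ^ k := Nat.pow_pos hn
  have dvd_pow_sub_one : d ∣ n ^ k - 1 :=
    (Nat.modEq_iff_dvd' one_le_pow).1 (by simpa only [one_pow] using (h.pow k).symm)
  rw [card_ne_zero_and_dvd_sum_eq_card_fin h, card_fin_ne_zero_and_dvd,
    Nat.mul_div_cancel' dvd_pow_sub_one, Nat.sub_add_cancel one_le_pow]

/-- The number of nonzero vectors `v ∈ {0,…,n-1}^k` whose integer
coordinate sum is divisible by `n-1` is `(n^k - 1)/(n - 1)`. -/
theorem card_V (n k : ℕ) (hn : 2 ≤ n) (hk : 1 ≤ k) :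
    (Finset.univ.filter (fun v : Fin k → Fin n =>
        (∃ i, (v i : ℕ) ≠ 0) ∧ (n - 1) ∣ ∑ i, (v i : ℕ))).card =
      (n ^ k - 1) / (n - 1) := by
  rw [← card_V_general (by lia) (Nat.modEq_sub (by lia : 1 ≤ n)) k, Nat.add_sub_cancel,
    Nat.mul_div_cancel_left _ (by lia)]
end

section
/- Let n ≥ 2 and k ≥ 1 be integers and let ℓ ∈ {1, …, k}. The number of pairs (r, v) with r ∈ {1, …, n} and v ∈ V satisfying v_ℓ ≠ 0 is exactly n^k. -/
/-!
The nonzero digits `1, …, n - 1` represent every residue modulo `n - 1` exactly once. Hence the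
entries of `v` off `ℓ` may be chosen freely, and the condition on the sum then determines the
nonzero entry `v ℓ`. The `n` choices of `r` make up for the lost freedom at `ℓ`.
-/

section

open Finset

variable {ι α β G : Type*}

theorem card_filter_prod_of_existsUnique_fst [Fintype α] [Fintype β] {r : α → β → Prop}
    [DecidablePred fun p : α × β => r p.1 p.2] (hr : ∀ b, ∃! a, r a b) :
    #{p : α × β | r p.1 p.2} = Fintype.card β := by
  rw [← card_univ]
  refine card_nbij Prod.snd (fun _ _ => mem_coe.2 (mem_univ _)) ?_ fun b _ => ?_
  · rintro ⟨a, b⟩ h ⟨a', _⟩ h' rfl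
    simp only [mem_coe, mem_filter_univ] at h h'
    rw [(hr b).unique h h']
  · obtain ⟨a, ha, -⟩ := hr b
    exact ⟨(a, b), by simpa using ha, rfl⟩

theorem card_mul_card_filter_and_sum_eq [Fintype ι] [DecidableEq ι] [Fintype α] [AddCommGroup G]
    [DecidableEq G] {P : α → Prop} [DecidablePred P] {f : α → G}
    (hf : ∀ g, ∃! x, P x ∧ f x = g) (ℓ : ι) (g : G) :
    Fintype.card α * #{v : ι → α | P (v ℓ) ∧ ∑ i, f (v i) = g} =
      Fintype.card α ^ Fintype.card ι := by
  have hsplit : #{v : ι → α | P (v ℓ) ∧ ∑ i, f (v i) = g} =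
      #{p : α × ({i // i ≠ ℓ} → α) | P p.1 ∧ f p.1 = g - ∑ i, f (p.2 i)} :=
    card_equiv (Equiv.funSplitAt ℓ α) fun v => by
      simp [Fintype.sum_eq_add_sum_subtype_ne _ ℓ, eq_sub_iff_add_eq]
  have hfree := card_filter_prod_of_existsUnique_fst
    fun w : {i // i ≠ ℓ} → α => hf (g - ∑ i, f (w i))
  rw [hsplit, hfree, ← Fintype.card_prod, ← Fintype.card_congr (Equiv.funSplitAt ℓ α),
    Fintype.card_fun]

theorem existsUnique_fin_ne_zero_and_natCast_eq (m : ℕ) [NeZero m] (a : ZMod m) :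
    ∃! x : Fin (m + 1), x ≠ 0 ∧ ((x : ℕ) : ZMod m) = a := by
  refine ⟨Fin.succ ⟨(a - 1).val, ZMod.val_lt _⟩, ⟨Fin.succ_ne_zero _, by simp⟩, ?_⟩
  rintro x ⟨hx, rfl⟩
  obtain ⟨y, rfl⟩ := Fin.exists_succ_eq.2 hx
  have hy : (((y.succ : ℕ) : ZMod m) - 1).val = y := by
    simp [ZMod.val_natCast_of_lt y.isLt]
  exact congrArg Fin.succ (Fin.ext hy.symm)

theorem card_W1_general [Fintype ι] [DecidableEq ι] {n : ℕ} (hn : 2 ≤ n) (ℓ : ι) (a : ℕ) :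
    #{p : Fin n × (ι → Fin n) | (p.2 ℓ : ℕ) ≠ 0 ∧ ∑ i, (p.2 i : ℕ) ≡ a [MOD n - 1]} =
      n ^ Fintype.card ι := by
  obtain ⟨m, rfl⟩ := Nat.exists_eq_add_of_le' (one_le_two.trans hn)
  have : NeZero m := ⟨by lia⟩
  have hcount :=
    card_mul_card_filter_and_sum_eq (existsUnique_fin_ne_zero_and_natCast_eq m) ℓ (a : ZMod m)
  calc
    _ = #((univ : Finset (Fin (m + 1))) ×ˢ
          ({v | v ℓ ≠ 0 ∧ ∑ i, ((v i : ℕ) : ZMod m) = a} : Finset (ι → Fin (m + 1)))) := by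
      congr 1
      ext p
      simp [← ZMod.natCast_eq_natCast_iff]
    _ = (m + 1) ^ Fintype.card ι := by
      rw [card_product, card_univ, hcount, Fintype.card_fin]

end

/-- For a fixed record index `ℓ`, the number of pairs `(r, v)` with
`r ∈ {1,…,n}` and `v ∈ V` (nonzero vectors in `{0,…,n-1}^k` with coordinate sum
divisible by `n-1`) satisfying `v ℓ ≠ 0` is exactly `n^k`. -/
theorem card_W1 (n k : ℕ) (hn : 2 ≤ n) (hk : 1 ≤ k) (ℓ : Fin k) :
    (Finset.univ.filter (fun p : Fin n × (Fin k → Fin n) =>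
        ((∃ i, (p.2 i : ℕ) ≠ 0) ∧ (n - 1) ∣ ∑ i, (p.2 i : ℕ)) ∧
          (p.2 ℓ : ℕ) ≠ 0)).card = n ^ k := by
  convert card_W1_general hn ℓ 0 using 2
  · grind [Nat.modEq_zero_iff_dvd]
  · simp
end

section
/- Let n ≥ 2 and k ≥ 1 be integers and let s be an integer with 0 ≤ s ≤ k−1. The number of vectors v ∈ V such that v_1 = v_2 = ⋯ = v_s = 0 and v_{s+1} ≠ 0 is exactly n^{k−s−1}. -/
/-! The nonzero digits `1, …, n - 1` represent every residue class modulo `n - 1` exactly once.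
Hence the entries after the first nonzero one can be chosen freely, and the congruence on the
coordinate sum then determines the first nonzero entry. -/

theorem existsUnique_digit_ne_zero_add_modEq {n : ℕ} (hn : 2 ≤ n) (S c : ℕ) :
    ∃! a : Fin n, (a : ℕ) ≠ 0 ∧ a + S ≡ c [MOD n - 1] := by
  obtain ⟨m, rfl⟩ : ∃ m, n = m + 2 := Nat.exists_eq_add_of_le' hn
  change ∃! a : Fin (m + 2), (a : ℕ) ≠ 0 ∧ a + S ≡ c [MOD m + 1]
  obtain ⟨r, hr, hrc⟩ : ∃ r < m + 1, r + 1 + S ≡ c [MOD m + 1] := by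
    -- Since `m ≡ -1`, the term `m * (S + 1)` plays the role of `-(S + 1)`.
    refine ⟨(c + m * (S + 1)) % (m + 1), Nat.mod_lt _ m.succ_pos, ?_⟩
    calc (c + m * (S + 1)) % (m + 1) + 1 + S
        ≡ c + m * (S + 1) + 1 + S [MOD m + 1] := ((Nat.mod_modEq _ _).add_right 1).add_right S
      _ = c + (m + 1) * (S + 1) := by ring
      _ ≡ c [MOD m + 1] := by simp [Nat.ModEq]
  refine ⟨⟨r + 1, by omega⟩, ⟨r.succ_ne_zero, hrc⟩, fun b ⟨hb, hbc⟩ ↦ Fin.ext ?_⟩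
  have hb_modEq : b ≡ r + 1 [MOD m + 1] := Nat.ModEq.add_right_cancel' S (hbc.trans hrc.symm)
  exact hb_modEq.eq_of_abs_lt (abs_lt.2 (by omega))

theorem existsUnique_eq_off_of_existsUnique_update {ι : Type*} [DecidableEq ι] {α : ι → Type*}
    {p : ι} {u : ∀ i, α i} {P : (∀ i, α i) → Prop}
    (h : ∃! a, P (Function.update u p a)) : ∃! v, P v ∧ ∀ i ≠ p, v i = u i := by
  obtain ⟨a, ha, ha_unique⟩ := h
  refine ⟨Function.update u p a, ⟨ha, fun i hi ↦ Function.update_of_ne hi a u⟩, ?_⟩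
  rintro v ⟨hv, hvu⟩
  have hv_eq : Function.update u p (v p) = v :=
    Function.update_eq_iff.2 ⟨rfl, fun i hi ↦ (hvu i hi).symm⟩
  rw [← hv_eq, ha_unique (v p) (by simpa only [hv_eq] using hv)]

theorem card_filter_eq_prod_of_existsUnique_restrict {ι : Type*} [Fintype ι] [DecidableEq ι]
    {α : ι → Type*} [∀ i, Fintype (α i)] {P : (∀ i, α i) → Prop} [DecidablePred P] (T : Finset ι)
    (h : ∀ w : ∀ i : T, α i, ∃! v, P v ∧ T.restrict v = w) :
    (Finset.univ.filter P).card = ∏ i ∈ T, Fintype.card (α i) := by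
  have hbij : Function.Bijective fun v : {v // P v} ↦ T.restrict v.1 := by
    refine (Function.bijective_iff_existsUnique _).2 fun w ↦ ?_
    obtain ⟨v, ⟨hv, hvw⟩, hv_unique⟩ := h w
    exact ⟨⟨v, hv⟩, hvw, fun v' hv' ↦ Subtype.ext (hv_unique v' ⟨v'.2, hv'⟩)⟩
  rw [← Fintype.card_subtype, Fintype.card_of_bijective hbij, Fintype.card_pi,
    Finset.prod_coe_sort T fun i ↦ Fintype.card (α i)]

theorem forall_mem_union_eq_dite_iff {ι : Type*} [DecidableEq ι] {α : ι → Type*}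
    {T Z : Finset ι} (hTZ : Disjoint T Z) (z v : ∀ i, α i) (w : ∀ i : T, α i) :
    (∀ i ∈ T ∪ Z, v i = if hi : i ∈ T then w ⟨i, hi⟩ else z i) ↔
      T.restrict v = w ∧ ∀ i ∈ Z, v i = z i := by
  rw [Finset.forall_mem_union, funext_iff, Subtype.forall]
  refine and_congr (forall₂_congr fun i hi ↦ ?_) (forall₂_congr fun i hi ↦ ?_)
  · rw [dif_pos hi, Finset.restrict]
  · rw [dif_neg (Finset.disjoint_right.1 hTZ hi)]

section

variable {ι : Type*} [Fintype ι] [DecidableEq ι] {n : ℕ}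

theorem sum_val_update (u : ι → Fin n) (p : ι) (a : Fin n) :
    ∑ i, (Function.update u p a i : ℕ) = a + ∑ i ∈ Finset.univ \ {p}, (u i : ℕ) := by
  simp only [Function.apply_update (fun _ ↦ Fin.val),
    Finset.sum_update_of_mem (Finset.mem_univ p)]

theorem existsUnique_sum_modEq_of_restrict (hn : 2 ≤ n) (c : ℕ) {Z : Finset ι} {p : ι}
    (hp : p ∉ Z) (w : ↥(insert p Z)ᶜ → Fin n) :
    ∃! v : ι → Fin n,
      (∑ i, (v i : ℕ) ≡ c [MOD n - 1] ∧ (∀ i ∈ Z, (v i : ℕ) = 0) ∧ (v p : ℕ) ≠ 0) ∧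
        (insert p Z)ᶜ.restrict v = w := by
  have : NeZero n := ⟨by omega⟩
  let u : ι → Fin n := fun i ↦ if hi : i ∈ (insert p Z)ᶜ then w ⟨i, hi⟩ else 0
  have hcover (i : ι) : i ≠ p ↔ i ∈ (insert p Z)ᶜ ∪ Z := by
    rw [Finset.mem_union, Finset.mem_compl, Finset.mem_insert]
    grind
  have hdisj : Disjoint (insert p Z)ᶜ Z := disjoint_compl_left.mono_right (Finset.subset_insert p Z)
  have hu (v : ι → Fin n) : (∀ i ≠ p, v i = u i) ↔
      (insert p Z)ᶜ.restrict v = w ∧ ∀ i ∈ Z, (v i : ℕ) = 0 := by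
    simp only [hcover, Fin.val_eq_zero_iff]
    exact forall_mem_union_eq_dite_iff hdisj 0 v w
  have hupdate : ∃! a, (Function.update u p a p : ℕ) ≠ 0 ∧
      ∑ i, (Function.update u p a i : ℕ) ≡ c [MOD n - 1] := by
    simpa only [sum_val_update, Function.update_self] using
      existsUnique_digit_ne_zero_add_modEq hn _ c
  refine (existsUnique_congr fun v ↦ ?_).1
    (existsUnique_eq_off_of_existsUnique_update
      (P := fun v : ι → Fin n ↦ (v p : ℕ) ≠ 0 ∧ ∑ i, (v i : ℕ) ≡ c [MOD n - 1]) hupdate)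
  rw [hu]
  tauto

theorem card_V_leading_zeros_general (hn : 2 ≤ n) (c : ℕ) {Z : Finset ι} {p : ι} (hp : p ∉ Z) :
    (Finset.univ.filter fun v : ι → Fin n ↦
      ∑ i, (v i : ℕ) ≡ c [MOD n - 1] ∧ (∀ i ∈ Z, (v i : ℕ) = 0) ∧ (v p : ℕ) ≠ 0).card =
      n ^ (Fintype.card ι - Z.card - 1) := by
  rw [card_filter_eq_prod_of_existsUnique_restrict (insert p Z)ᶜ
      (existsUnique_sum_modEq_of_restrict hn c hp),
    Finset.prod_const, Fintype.card_fin, Finset.card_compl, Finset.card_insert_of_notMem hp,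
    Nat.sub_sub]

end

/-- The number of vectors `v ∈ V` (nonzero vectors in
`{0,…,n-1}^k` with integer coordinate sum divisible by `n-1`) whose first `s`
coordinates are zero and whose `(s+1)`-st coordinate is nonzero is `n^(k-s-1)`. -/
theorem card_V_leading_zeros (n k s : ℕ) (hn : 2 ≤ n) (hk : 1 ≤ k) (hs : s ≤ k - 1) :
    (Finset.univ.filter (fun v : Fin k → Fin n =>
        ((∃ i, (v i : ℕ) ≠ 0) ∧ (n - 1) ∣ ∑ i, (v i : ℕ)) ∧
          (∀ i : Fin k, (i : ℕ) < s → (v i : ℕ) = 0) ∧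
          (v ⟨s, by omega⟩ : ℕ) ≠ 0)).card = n ^ (k - s - 1) := by
  have hcard := card_V_leading_zeros_general hn 0
    (Finset.notMem_Iio_self (b := (⟨s, by omega⟩ : Fin k)))
  simp only [Nat.modEq_zero_iff_dvd, Finset.mem_Iio, Fin.lt_def, Fin.card_Iio,
    Fintype.card_fin] at hcard
  rw [← hcard]
  congr! 2 with v
  exact and_congr_left fun hv ↦ and_iff_right ⟨_, hv.2⟩
end

section
/- Let n ≥ 2 and k ≥ 1 be integers. The number of pairs (i, v) with i ∈ {1, …, k} and v ∈ V satisfying v_i ≠ 0 is exactly k·n^{k−1}. -/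
/-!
A vector with `v i ≠ 0` is automatically nonzero, so only the condition on the sum matters. Fix `i`
and the entries of `v` other than `v i`. The nonzero digits `1, …, n - 1` represent each residue
class modulo `n - 1` exactly once, so exactly one nonzero value of `v i` gives the sum of the
entries the required residue. Hence each `i` occurs in `n ^ (k - 1)` of the pairs.
-/

section Transversal

variable {ι α G : Type*} [Fintype ι] [DecidableEq ι] [Fintype α] [AddCommGroup G] [DecidableEq G]
  {P : α → Prop} [DecidablePred P] {f : α → G}

theorem card_filter_apply_and_sum_eq (hf : ∀ g, ∃! a, P a ∧ f a = g) (i : ι) (c : G) :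
    (Finset.univ.filter fun v : ι → α => P (v i) ∧ ∑ j, f (v j) = c).card =
      Fintype.card α ^ (Fintype.card ι - 1) := by
  have existsUnique_entry (u : {j // j ≠ i} → α) : ∃! a, P a ∧ f a + ∑ j, f (u j) = c := by
    simpa only [eq_sub_iff_add_eq] using hf (c - ∑ j, f (u j))
  calc
    _ = (Finset.univ.filter fun q : α × ({j // j ≠ i} → α) =>
          P q.1 ∧ f q.1 + ∑ j, f (q.2 j) = c).card :=
      Finset.card_equiv (Equiv.funSplitAt i α) fun v => by
        simp [Fintype.sum_eq_add_sum_subtype_ne _ i]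
    _ = ∑ u : {j // j ≠ i} → α,
          (Finset.univ.filter fun a => P a ∧ f a + ∑ j, f (u j) = c).card := by
      simp only [Finset.card_filter, Fintype.sum_prod_type_right]
    _ = ∑ _u : {j // j ≠ i} → α, 1 :=
      Finset.sum_congr rfl fun u _ =>
        (Fintype.existsUnique_iff_card_one _).mp (existsUnique_entry u)
    _ = Fintype.card α ^ (Fintype.card ι - 1) := by
      simp

theorem card_filter_prod_apply_and_sum_eq (hf : ∀ g, ∃! a, P a ∧ f a = g) (c : G) :
    (Finset.univ.filter fun p : ι × (ι → α) => P (p.2 p.1) ∧ ∑ j, f (p.2 j) = c).card =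
      Fintype.card ι * Fintype.card α ^ (Fintype.card ι - 1) := by
  calc
    _ = ∑ i, (Finset.univ.filter fun v : ι → α => P (v i) ∧ ∑ j, f (v j) = c).card := by
      simp only [Finset.card_filter, Fintype.sum_prod_type]
    _ = _ := by
      simp [card_filter_apply_and_sum_eq hf]

end Transversal

theorem existsUnique_fin_val_ne_zero_and_natCast_eq (m : ℕ) [NeZero m] (c : ZMod m) :
    ∃! x : Fin (m + 1), (x : ℕ) ≠ 0 ∧ ((x : ℕ) : ZMod m) = c := by
  refine ⟨Fin.succ ⟨(c - 1).val, ZMod.val_lt _⟩, by simp, ?_⟩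
  rintro x ⟨hx, rfl⟩
  obtain ⟨y, rfl⟩ := Fin.exists_succ_eq.mpr (Fin.val_ne_zero_iff.mp hx)
  simp [ZMod.val_natCast_of_lt y.isLt]

theorem card_nonzero_entries_general {ι : Type*} [Fintype ι] [DecidableEq ι] (n c : ℕ)
    (hn : 2 ≤ n) :
    (Finset.univ.filter fun p : ι × (ι → Fin n) =>
        (p.2 p.1 : ℕ) ≠ 0 ∧ ∑ i, (p.2 i : ℕ) ≡ c [MOD n - 1]).card =
      Fintype.card ι * n ^ (Fintype.card ι - 1) := by
  obtain ⟨m, rfl⟩ : ∃ m, n = m + 1 := ⟨n - 1, by omega⟩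
  have : NeZero m := ⟨by omega⟩
  simpa [← ZMod.natCast_eq_natCast_iff] using
    card_filter_prod_apply_and_sum_eq (ι := ι) (existsUnique_fin_val_ne_zero_and_natCast_eq m) c

/-- The number of pairs `(i, v)` with `i ∈ {1,…,k}` and `v ∈ V`
(nonzero vectors in `{0,…,n-1}^k` with integer coordinate sum divisible by `n-1`)
satisfying `v i ≠ 0` is exactly `k·n^(k-1)`. -/
theorem card_nonzero_entries (n k : ℕ) (hn : 2 ≤ n) (hk : 1 ≤ k) :
    (Finset.univ.filter (fun p : Fin k × (Fin k → Fin n) =>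
        ((∃ i, (p.2 i : ℕ) ≠ 0) ∧ (n - 1) ∣ ∑ i, (p.2 i : ℕ)) ∧
          (p.2 p.1 : ℕ) ≠ 0)).card = k * n ^ (k - 1) := by
  convert card_nonzero_entries_general (ι := Fin k) n 0 hn using 3 <;>
    grind [Nat.modEq_zero_iff_dvd, Fintype.card_fin]
end
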